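/- There exists a constant C > 0 such that for every n ≥ 0, ∑_{v∈ℤ^d} |x_n(v)| ≤ C. (The ℓ¹ norms, i.e. the total variations of the signed measures defined by the Jacobi polynomial iteration, are bounded uniformly in n.) -/

import Mathlib

open MeasureTheory Matrix Filter Topology Real

noncomputable section

def latticeConv {d : ℕ} (ω x : (Fin d → ℤ) → ℝ) : (Fin d → ℤ) → ℝ :=
  fun v => ∑' η : Fin d → ℤ, ω (v - η) * x η

def covQ (d : ℕ) (ω : (Fin d → ℤ) → ℝ) : Matrix (Fin d) (Fin d) ℝ :=
  Matrix.of fun i j => ∑' v : Fin d → ℤ, ω v * (v i : ℝ) * (v j : ℝ)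

def ftOmega {d : ℕ} (ω : (Fin d → ℤ) → ℝ) (ξ : Fin d → ℝ) : ℂ :=
  ∑' v : Fin d → ℤ, (ω v : ℂ) * Complex.exp (Complex.I * ((∑ i, ξ i * (v i : ℝ) : ℝ) : ℂ))

def aCoef0 (d : ℕ) : ℝ := ((d : ℝ) + 4) / (2 * (2 + (d : ℝ)))
def bCoef0 (d : ℕ) : ℝ := (d : ℝ) / (2 * (2 + (d : ℝ)))
def aCoef (d n : ℕ) : ℝ :=
  (2 * (n : ℝ) + (d : ℝ)/2 + 1) * (2 * (n : ℝ) + (d : ℝ)/2 + 2) / (2 * ((n : ℝ) + 1 + (d : ℝ)/2)^2)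
def bCoef (d n : ℕ) : ℝ :=
  (d : ℝ)^2 * (2 * (n : ℝ) + (d : ℝ)/2 + 1) / (8 * ((n : ℝ) + 1 + (d : ℝ)/2)^2 * (2 * (n : ℝ) + (d : ℝ)/2))
def cCoef (d n : ℕ) : ℝ :=
  (n : ℝ)^2 * (2 * (n : ℝ) + (d : ℝ)/2 + 2) / (((n : ℝ) + 1 + (d : ℝ)/2)^2 * (2 * (n : ℝ) + (d : ℝ)/2))

def besselJ (ν z : ℝ) : ℝ :=
  ∑' m : ℕ, ((-1 : ℝ)^m / ((m.factorial : ℝ) * Real.Gamma ((m : ℝ) + ν + 1))) * (z / 2) ^ (2 * (m : ℝ) + ν)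

def jacobiP (α β : ℝ) (n : ℕ) (x : ℝ) : ℝ :=
  ∑ s ∈ Finset.range (n + 1),
    (Real.Gamma ((n : ℝ) + α + 1) / (Real.Gamma (α + (s : ℝ) + 1) * ((n - s).factorial : ℝ))) *
    (Real.Gamma ((n : ℝ) + β + 1) / (Real.Gamma ((n : ℝ) + β - (s : ℝ) + 1) * (s.factorial : ℝ))) *
    ((x - 1) / 2) ^ s * ((x + 1) / 2) ^ (n - s)

def jacobiPi (α β : ℝ) (n : ℕ) (x : ℝ) : ℝ := jacobiP α β n x / jacobiP α β n 1

def pd {d : ℕ} (j : Fin d) (g : (Fin d → ℝ) → ℝ) : (Fin d → ℝ) → ℝ :=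
  fun y => deriv (fun s => g (Function.update y j s)) (y j)

def JP (d : ℕ) : ℕ → Polynomial ℝ
  | 0 => 1
  | 1 => Polynomial.C (aCoef0 d) * (1 - Polynomial.X) + Polynomial.C (bCoef0 d)
  | (n+2) => (Polynomial.C (aCoef d (n+1)) * (1 - Polynomial.X) + Polynomial.C (bCoef d (n+1))) * JP d (n+1)
      - Polynomial.C (cCoef d (n+1)) * JP d n

lemma JP_rec (d n : ℕ) (t : ℝ) : (JP d (n+2)).eval t =
    (aCoef d (n+1) * (1 - t) + bCoef d (n+1)) * (JP d (n+1)).eval t - cCoef d (n+1) * (JP d n).eval t := by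
  rw [JP]; simp

lemma JP_drec (d n : ℕ) (t : ℝ) : (JP d (n+2)).derivative.eval t =
    - aCoef d (n+1) * (JP d (n+1)).eval t
    + (aCoef d (n+1) * (1 - t) + bCoef d (n+1)) * (JP d (n+1)).derivative.eval t
    - cCoef d (n+1) * (JP d n).derivative.eval t := by
  rw [JP]; simp

lemma JP_struct (d : ℕ) (α : ℝ) (hα : α = d / 2) (n : ℕ) : ∀ t : ℝ,
    (-(2*n+α+2)*(t*(2-t)) * (JP d n).derivative.eval t =
      (n+α+1)*(α+(2*n+α+2)*(1-t)) * (JP d n).eval t - 2*(n+α+1)^2 * (JP d (n+1)).eval t) ∧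
    (-(2*n+2+α)*(t*(2-t)) * (JP d (n+1)).derivative.eval t =
      (n+1)*(α-(2*n+2+α)*(1-t)) * (JP d (n+1)).eval t + 2*(n+1)^2 * (JP d n).eval t) := by
  have hα0 : 0 ≤ α := by rw [hα]; positivity
  have hd : (d:ℝ) = 2 * α := by rw [hα]; ring
  induction n with
  | zero =>
    intro t
    simp only [JP, aCoef0, bCoef0, hd]
    have h1 : (1 + α) ≠ 0 := by positivity
    have h2 : (2 + 2 * α) ≠ 0 := by positivity
    simp
    constructor
    · field_simp; try ring
    · field_simp; try ring
  | succ n ih =>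
    intro t
    obtain ⟨hB, hA⟩ := ih t
    obtain ⟨m, hm⟩ : ∃ m : ℝ, m = n + 1 := ⟨_, rfl⟩
    have hm0 : 0 < m := by rw [hm]; positivity
    have e : (n:ℝ) = m - 1 := by rw [hm]; ring
    have h1 : (m + 1 + α) ≠ 0 := by positivity
    have h2 : (2 * m + α) ≠ 0 := by positivity
    have ha : aCoef d (n+1) = (2*m+α+1)*(2*m+α+2)*(2*m+α)/(2*(m+1+α)^2*(2*m+α)) := by
      simp only [aCoef, hd]; push_cast; rw [← hm]; field_simp
    have hb : bCoef d (n+1) = α^2*(2*m+α+1)/(2*(m+1+α)^2*(2*m+α)) := by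
      simp only [bCoef, hd]; push_cast; rw [← hm]; field_simp; ring
    have hc : cCoef d (n+1) = 2*m^2*(2*m+α+2)/(2*(m+1+α)^2*(2*m+α)) := by
      simp only [cCoef, hd]; push_cast; rw [← hm]; field_simp
    have hK : 2*(m+1+α)^2*(2*m+α) ≠ 0 := by positivity
    have hr := JP_rec d n t
    have hdr := JP_drec d n t
    rw [ha, hb, hc] at hr hdr
    push_cast
    generalize (JP d n).eval t = y0 at *
    generalize (JP d (n+1)).eval t = y1 at *
    generalize (JP d (n+2)).eval t = y2 at *
    generalize (JP d n).derivative.eval t = D0 at *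
    generalize (JP d (n+1)).derivative.eval t = D1 at *
    generalize (JP d (n+2)).derivative.eval t = D2 at *
    have hr' : 2*(m+1+α)^2*(2*m+α) * y2 = ((2*m+α+1)*(2*m+α+2)*(2*m+α)*(1-t) + α^2*(2*m+α+1)) * y1
        - 2*m^2*(2*m+α+2) * y0 := by
      rw [hr]; field_simp
    have hdr' : 2*(m+1+α)^2*(2*m+α) * D2 = - ((2*m+α+1)*(2*m+α+2)*(2*m+α)) * y1
        + ((2*m+α+1)*(2*m+α+2)*(2*m+α)*(1-t) + α^2*(2*m+α+1)) * D1
        - 2*m^2*(2*m+α+2) * D0 := by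
      rw [hdr]; field_simp
    rw [e] at hA hB ⊢
    clear hr hdr ha hb hc
    constructor
    · apply mul_left_cancel₀ h2
      linear_combination (2*m+α+2) * hA + hr'
    · apply mul_left_cancel₀ h2
      apply mul_left_cancel₀ hK
      linear_combination (-(2*m+α+2)*(t*(2-t))*(2*m+α)) * hdr'
        + (2*m+α+2)*((2*m+α+1)*(2*m+α+2)*(2*m+α)*(1-t) + α^2*(2*m+α+1)) * hA
        - (2*m+α+2)*(2*m^2*(2*m+α+2)) * hB
        - (2*m+α)*(m+1)*(α-(2*m+2+α)*(1-t)) * hr'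

lemma JP_ode (d : ℕ) (α : ℝ) (hα : α = d / 2) (n : ℕ) (t : ℝ) (ht : 0 < t) (ht2 : t < 2) :
    t*(2-t) * (JP d (n+1)).derivative.derivative.eval t + (2*(α+1) - (α+2)*t) * (JP d (n+1)).derivative.eval t
     + ((n+1)*(n+1+α+1)) * (JP d (n+1)).eval t = 0 := by
  have hα0 : 0 ≤ α := by rw [hα]; positivity
  obtain ⟨m, hm⟩ : ∃ m : ℝ, m = n + 1 := ⟨_, rfl⟩
  have hm0 : 0 < m := by rw [hm]; positivity
  have e : (n:ℝ) = m - 1 := by rw [hm]; ring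
  have h2 : (2 * m + α) ≠ 0 := by positivity
  have hp : (Polynomial.C (-(2*m+α))*(Polynomial.X*(2-Polynomial.X)) * (JP d (n+1)).derivative) =
      (Polynomial.C m*(Polynomial.C α-Polynomial.C (2*m+α)*(1-Polynomial.X)) * (JP d (n+1)) + Polynomial.C (2*(m*m)) * (JP d n)) := by
    apply Polynomial.funext
    intro s
    have := (JP_struct d α hα n s).2
    rw [e] at this
    simp
    linear_combination this
  have hd := congrArg (fun p => (Polynomial.derivative p).eval t) hp
  simp [-map_mul] at hd
  obtain ⟨hB, hA⟩ := JP_struct d α hα n t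
  rw [e] at hA hB ⊢
  have ht3 : t * (2 - t) ≠ 0 := by
    have : 0 < 2 - t := by linarith
    positivity
  apply mul_left_cancel₀ h2
  apply mul_left_cancel₀ h2
  apply mul_left_cancel₀ ht3
  linear_combination (-(t*(2-t)*(2*m+α))) * hd + 2*m^2 * hB - (m+α)*(α+(2*m+α)*(1-t)) * hA

lemma JP_zero (d n : ℕ) : (JP d n).eval 0 = 1 := by
  induction n with
  | zero => simp [JP]
  | succ n ih =>
    have := (JP_struct d (d/2) rfl n 0).1
    rw [ih] at this
    have h : (2 * ((n:ℝ) + d/2 + 1)^2) ≠ 0 := by positivity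
    apply mul_left_cancel₀ h
    linear_combination this

lemma ode_U (α l : ℝ) (hα : 0 ≤ α) (hl : 0 < l) (f g h : ℝ → ℝ)
    (hf : ∀ t, HasDerivAt f (g t) t) (hg : ∀ t, HasDerivAt g (h t) t)
    (hode : ∀ t, 0 < t → t < 2 → t*(2-t) * h t + (2*(α+1) - (α+2)*t) * g t + l * f t = 0) :
    AntitoneOn (fun t => (2-t)*((f t)^2 + t*(2-t)/l * (g t)^2)) (Set.Icc 0 2) := by
  have hder : ∀ t, HasDerivAt (fun t => (2-t)*((f t)^2 + t*(2-t)/l * (g t)^2))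
      ((-1)*((f t)^2 + t*(2-t)/l * (g t)^2) + (2-t)*(2*f t*g t + ((1*(2-t) + t*(-1))/l * (g t)^2 + t*(2-t)/l * (2*g t*h t)))) t := by
    intro t
    have h1 : HasDerivAt (fun t : ℝ => 2 - t) (-1) t := by
      simpa using (hasDerivAt_id t).const_sub 2
    have := h1.mul (((hf t).pow 2).add (((((hasDerivAt_id t).mul h1).div_const l)).mul ((hg t).pow 2)))
    refine this.congr_deriv ?_
    simp
  apply antitoneOn_of_deriv_nonpos (convex_Icc 0 2)
  · exact fun t _ => (hder t).continuousAt.continuousWithinAt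
  · exact fun t _ => (hder t).differentiableAt.differentiableWithinAt
  · intro t ht
    rw [interior_Icc] at ht
    rw [(hder t).deriv]
    have ho := hode t ht.1 ht.2
    have : ((-1)*((f t)^2 + t*(2-t)/l * (g t)^2) + (2-t)*(2*f t*g t + ((1*(2-t) + t*(-1))/l * (g t)^2 + t*(2-t)/l * (2*g t*h t))))
       = -(f t)^2 - (2*α+1)*(2-t)^2*(g t)^2/l := by
      field_simp
      linear_combination (2 - t) * 2 * g t * ho
    rw [this]
    have : 0 ≤ (2*α+1)*(2-t)^2*(g t)^2/l := by positivity
    nlinarith [sq_nonneg (f t)]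

lemma cross_bound (σ l t δ a b : ℝ) (hl : 0 < l) (hσ : 0 < σ) (hδ : 0 < δ) (ht : 16*σ^2/δ ≤ l * t)
    (htδ : t ≤ 2 - δ) : σ/l * 8 * |a * b| ≤ a^2 + t*(2-t)/l * b^2 := by
  have ht0 : 0 < t := by
    have : 0 < l * t := lt_of_lt_of_le (by positivity) ht
    exact pos_of_mul_pos_right this hl.le
  have h1 : 16 * σ^2 ≤ l * (t * (2-t)) := by
    rw [div_le_iff₀ hδ] at ht
    have : l * t * δ ≤ l * t * (2-t) := by
      apply mul_le_mul_of_nonneg_left (by linarith) (by positivity)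
    linarith
  have h2 : 16 * (σ/l)^2 ≤ t*(2-t)/l := by
    rw [div_pow, ← mul_div_assoc, div_le_div_iff₀ (by positivity) hl]
    nlinarith
  have h3 : 16 * (σ/l)^2 * b^2 ≤ t*(2-t)/l * b^2 := by gcongr
  rw [abs_mul]
  nlinarith [sq_nonneg (|a| - 4*(σ/l)*|b|), sq_abs a, sq_abs b]

lemma ode_V (α l δ : ℝ) (hα : 0 ≤ α) (hl : 0 < l) (hδ : 0 < δ) (f g h : ℝ → ℝ)
    (hf : ∀ t, HasDerivAt f (g t) t) (hg : ∀ t, HasDerivAt g (h t) t)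
    (hode : ∀ t, 0 < t → t < 2 → t*(2-t) * h t + (2*(α+1) - (α+2)*t) * g t + l * f t = 0) :
    AntitoneOn (fun t => t^(α+1/4) * ((2-t)*((f t)^2 + t*(2-t)/l * (g t)^2 + (α+1/2)/l * (2-t)*(f t * g t))))
      (Set.Icc (16*(α+1/2)^2/δ/l) (2-δ)) := by
  have ht0 : 0 < 16*(α+1/2)^2/δ/l := by positivity
  set S : ℝ → ℝ := (fun t => ((2-t)*((f t)^2 + t*(2-t)/l * (g t)^2 + (α+1/2)/l * (2-t)*(f t * g t)))) with hS
  have hSd : ∀ t, HasDerivAt S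
      ((-1)*((f t)^2 + t*(2-t)/l * (g t)^2 + (α+1/2)/l * (2-t)*(f t * g t)) + (2-t)*(2*f t*g t + ((1*(2-t) + t*(-1))/l * (g t)^2 + t*(2-t)/l * (2*g t*h t))
       + ((α+1/2)/l * (-1)*(f t * g t) + (α+1/2)/l*(2-t)*(g t * g t + f t * h t)))) t := by
    intro t
    have h1 : HasDerivAt (fun t : ℝ => 2 - t) (-1) t := by
      simpa using (hasDerivAt_id t).const_sub 2
    have := h1.mul ((((hf t).pow 2).add (((((hasDerivAt_id t).mul h1).div_const l)).mul ((hg t).pow 2))).add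
      ((h1.const_mul ((α+1/2)/l)).mul ((hf t).mul (hg t))))
    refine this.congr_deriv ?_
    simp
  have hVd : ∀ t, 0 < t → HasDerivAt (fun t => t^(α+1/4) * S t) _ t := fun t ht =>
    (Real.hasDerivAt_rpow_const (p := α+1/4) (Or.inl ht.ne')).mul (hSd t)
  apply antitoneOn_of_deriv_nonpos (convex_Icc _ _)
  · exact fun t ht => (hVd t (lt_of_lt_of_le ht0 ht.1)).continuousAt.continuousWithinAt
  · intro t ht
    rw [interior_Icc] at ht
    exact (hVd t (lt_trans ht0 ht.1)).differentiableAt.differentiableWithinAt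
  · intro t ht
    rw [interior_Icc] at ht
    have htp : 0 < t := lt_trans ht0 ht.1
    rw [(hVd t htp).deriv]
    have ho := hode t htp (by linarith [ht.2])
    have ht2 : 0 < 2 - t := by linarith [ht.2]
    set σ := α + 1/2 with hσ
    have hcb := cross_bound σ l t δ (f t) (g t) hl (by positivity) hδ (by
      have := ht.1.le
      rw [div_le_iff₀ hl] at this; linarith) ht.2.le
    have hq : t^(α+1/4) = t^(α+1/4-1) * t := by
      rw [Real.rpow_sub_one htp.ne']; field_simp
    have hkey : ((-1)*((f t)^2 + t*(2-t)/l * (g t)^2 + σ/l * (2-t)*(f t * g t)) + (2-t)*(2*f t*g t + ((1*(2-t) + t*(-1))/l * (g t)^2 + t*(2-t)/l * (2*g t*h t))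
       + (σ/l * (-1)*(f t * g t) + σ/l*(2-t)*(g t * g t + f t * h t)))) * t
       = - σ * S t - t * f t ^2 - σ/(2*l)*(4-t^2)*(f t * g t) := by
      simp only [hS]
      rw [show α = σ - 1/2 by rw [hσ]; ring] at ho
      field_simp
      linear_combination (4 * t * (2-t) * g t + 2 * σ * (2 - t) * f t) * ho
    rw [hq]
    have : (α + 1/4) * t^(α+1/4-1) * S t + t^(α+1/4-1) * t * ((-1)*((f t)^2 + t*(2-t)/l * (g t)^2 + σ/l * (2-t)*(f t * g t)) + (2-t)*(2*f t*g t + ((1*(2-t) + t*(-1))/l * (g t)^2 + t*(2-t)/l * (2*g t*h t))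
       + (σ/l * (-1)*(f t * g t) + σ/l*(2-t)*(g t * g t + f t * h t))))
       = t^(α+1/4-1) * (-(1/4) * S t - t * f t ^2 - σ/(2*l)*(4-t^2)*(f t * g t)) := by
      rw [show α = σ - 1/2 by rw [hσ]; ring] at *
      linear_combination t^((σ-1/2)+1/4-1) * hkey
    rw [this]
    apply mul_nonpos_of_nonneg_of_nonpos (by positivity)
    have e2 : (-(1/4) * S t - t * f t ^2 - σ/(2*l)*(4-t^2)*(f t * g t))
      = - t * f t^2 - (2-t)/4 * ((f t)^2 + t*(2-t)/l * (g t)^2 + σ/l * (6+t) * (f t * g t)) := by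
      simp only [hS]; field_simp; ring
    rw [e2]
    have hs : 0 ≤ σ / l := by positivity
    have h5 : -(σ/l * 8 * |f t * g t|) ≤ σ/l * (6+t) * (f t * g t) := by
      have : |σ/l * (6+t) * (f t * g t)| ≤ σ/l * 8 * |f t * g t| := by
        rw [abs_mul, abs_mul, abs_of_nonneg hs, abs_of_nonneg (by linarith : 0 ≤ 6+t)]
        gcongr; linarith
      linarith [neg_abs_le (σ/l * (6+t) * (f t * g t))]
    have h6 : 0 ≤ (2-t)/4 * ((f t)^2 + t*(2-t)/l * (g t)^2 + σ/l * (6+t) * (f t * g t)) := by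
      apply mul_nonneg (by linarith) (by linarith)
    nlinarith [mul_nonneg htp.le (sq_nonneg (f t))]

lemma ode_bound (α l δ : ℝ) (hα : 0 ≤ α) (hl : 0 < l) (hδ : 0 < δ) (f g h : ℝ → ℝ)
    (hf : ∀ t, HasDerivAt f (g t) t) (hg : ∀ t, HasDerivAt g (h t) t) (hf0 : f 0 = 1)
    (hode : ∀ t, 0 < t → t < 2 → t*(2-t) * h t + (2*(α+1) - (α+2)*t) * g t + l * f t = 0)
    (t : ℝ) (ht : 0 ≤ t) (htδ : t ≤ 2 - δ) :
    (f t)^2 ≤ 2/δ ∧ (16*(α+1/2)^2/δ ≤ l * t → (l*t)^(α+1/4) * (f t)^2 ≤ 5/δ * (16*(α+1/2)^2/δ)^(α+1/4)) := by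
  have hU := ode_U α l hα hl f g h hf hg hode
  have hU' : ∀ s, 0 ≤ s → s ≤ 2 - δ → (2-s)*((f s)^2 + s*(2-s)/l * (g s)^2) ≤ 2 := by
    intro s hs hs2
    have := hU (Set.left_mem_Icc.2 (by norm_num)) (⟨hs, by linarith⟩ : s ∈ Set.Icc (0:ℝ) 2) hs
    simpa [hf0] using this
  have hlow : ∀ s, 0 ≤ s → s ≤ 2 - δ → (f s)^2 ≤ (f s)^2 + s*(2-s)/l * (g s)^2 := by
    intro s hs hs2
    have : 0 ≤ s*(2-s)/l * (g s)^2 := by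
      have : 0 ≤ 2 - s := by linarith
      positivity
    linarith
  constructor
  · rw [le_div_iff₀ hδ]
    nlinarith [hU' t ht htδ, hlow t ht htδ, sq_nonneg (f t)]
  · intro hK
    set K := 16*(α+1/2)^2/δ with hKd
    have hKp : 0 < K := by positivity
    set σ := α + 1/2 with hσ
    have hs : 0 ≤ σ / l := by positivity
    have ht0 : K / l ≤ t := by rw [div_le_iff₀ hl]; linarith
    have ht0p : 0 < K / l := by positivity
    have hV := ode_V α l δ hα hl hδ f g h hf hg hode (⟨le_rfl, ht0.trans htδ⟩) (⟨ht0, htδ⟩) ht0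
    simp only at hV
    have hcr : ∀ s, K / l ≤ s → s ≤ 2 - δ → |σ/l * (2-s)*(f s * g s)| ≤ 1/4 * ((f s)^2 + s*(2-s)/l * (g s)^2) := by
      intro s hs1 hs2
      have hcb := cross_bound σ l s δ (f s) (g s) hl (by positivity) hδ (by
        rw [div_le_iff₀ hl] at hs1; linarith) hs2
      rw [abs_mul, abs_mul, abs_of_nonneg hs, abs_of_nonneg (by linarith : 0 ≤ 2-s)]
      have : σ/l*(2-s)*|f s * g s| ≤ σ/l*2*|f s * g s| := by gcongr; linarith
      linarith
    have h1 := hcr t ht0 htδ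
    have h2 := hcr (K/l) le_rfl (ht0.trans htδ)
    have h3 := hU' (K/l) ht0p.le (ht0.trans htδ)
    have h4 := hlow t ht htδ
    have h5 : (δ/2) * (f t)^2 ≤ (2-t)*((f t)^2 + t*(2-t)/l * (g t)^2 + σ/l * (2-t)*(f t * g t)) := by
      have : 1/2 * (f t)^2 ≤ ((f t)^2 + t*(2-t)/l * (g t)^2 + σ/l * (2-t)*(f t * g t)) := by
        nlinarith [(abs_le.1 h1).1, sq_nonneg (f t)]
      nlinarith [sq_nonneg (f t)]
    have h6 : (2-K/l)*((f (K/l))^2 + K/l*(2-K/l)/l * (g (K/l))^2 + σ/l * (2-K/l)*(f (K/l) * g (K/l))) ≤ 5/2 := by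
      have := (abs_le.1 h2).2
      have h8 : 0 ≤ 2 - K/l := by linarith
      nlinarith
    have h7 : t^(α+1/4) * ((δ/2) * (f t)^2) ≤ (K/l)^(α+1/4) * (5/2) :=
      (mul_le_mul_of_nonneg_left h5 (by positivity)).trans (hV.trans (mul_le_mul_of_nonneg_left h6 (by positivity)))
    rw [Real.mul_rpow hl.le ht]
    rw [Real.div_rpow hKp.le hl.le] at h7
    have hlp : 0 < l^(α+1/4) := by positivity
    have h8 := mul_le_mul_of_nonneg_left h7 hlp.le
    have e8 : l^(α+1/4) * (K^(α+1/4)/l^(α+1/4) * (5/2)) = K^(α+1/4) * (5/2) := by field_simp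
    rw [e8] at h8
    rw [div_mul_eq_mul_div, le_div_iff₀ hδ]
    linarith

def dotz {d : ℕ} (ξ : Fin d → ℝ) (v : Fin d → ℤ) : ℝ := ∑ i, ξ i * (v i : ℝ)

def cw {d : ℕ} (S : Finset (Fin d → ℤ)) (ω : (Fin d → ℤ) → ℝ) (ξ : Fin d → ℝ) : ℝ :=
  ∑ v ∈ S, ω v * Real.cos (dotz ξ v)

lemma dotz_cont {d : ℕ} (v : Fin d → ℤ) : Continuous (fun ξ : Fin d → ℝ => dotz ξ v) := by
  unfold dotz; fun_prop

lemma cw_cont {d : ℕ} (S : Finset (Fin d → ℤ)) (ω : (Fin d → ℤ) → ℝ) : Continuous (cw S ω) := by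
  unfold cw
  exact continuous_finsetSum _ fun v _ => continuous_const.mul (Real.continuous_cos.comp (dotz_cont v))

lemma dotz_neg {d : ℕ} (ξ : Fin d → ℝ) (v : Fin d → ℤ) : dotz ξ (-v) = - dotz ξ v := by
  simp [dotz]

lemma ft_eq {d : ℕ} (S : Finset (Fin d → ℤ)) (ω : (Fin d → ℤ) → ℝ) (hS : ∀ v, v ∉ S → ω v = 0)
    (hsymm : ∀ v, ω (-v) = ω v) (ξ : Fin d → ℝ) : ftOmega ω ξ = (cw S ω ξ : ℂ) := by
  have h1 : ∀ k : (Fin d → ℤ) → ℂ, ∑' v, (ω v : ℂ) * k v = ∑ v ∈ S, (ω v : ℂ) * k v := by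
    intro k
    apply tsum_eq_sum
    intro v hv
    simp [hS v hv]
  have h2 : ftOmega ω ξ = ∑' v, (ω v : ℂ) * Complex.exp (Complex.I * (dotz ξ v : ℂ)) := rfl
  have h3 : ftOmega ω ξ = ∑' v, (ω v : ℂ) * Complex.exp (- (dotz ξ v : ℂ) * Complex.I) := by
    rw [h2, ← (Equiv.neg (Fin d → ℤ)).tsum_eq]
    apply tsum_congr
    intro v
    simp only [Equiv.neg_apply, hsymm, dotz_neg]
    congr 2
    push_cast; ring
  have h4 : ftOmega ω ξ + ftOmega ω ξ = 2 * (cw S ω ξ : ℂ) := by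
    conv_lhs => rw [h2, ← h2, h3]
    conv_lhs => arg 1; rw [← h3, h2]
    rw [h1, h1, cw, ← Finset.sum_add_distrib]
    push_cast
    rw [Finset.mul_sum]
    apply Finset.sum_congr rfl
    intro v _
    rw [Complex.cos]
    rw [mul_comm Complex.I]
    ring
  linear_combination h4 / 2

lemma quad_eq {d : ℕ} (S : Finset (Fin d → ℤ)) (ω : (Fin d → ℤ) → ℝ) (hS : ∀ v, v ∉ S → ω v = 0)
    (ξ : Fin d → ℝ) : ξ ⬝ᵥ (covQ d ω *ᵥ ξ) = ∑ v ∈ S, ω v * (dotz ξ v)^2 := by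
  have h1 : ∀ i j, covQ d ω i j = ∑ v ∈ S, ω v * (v i : ℝ) * (v j : ℝ) := by
    intro i j
    simp only [covQ, Matrix.of_apply]
    apply tsum_eq_sum
    intro v hv
    simp [hS v hv]
  simp only [dotProduct, Matrix.mulVec, h1, dotz, sq, Finset.sum_mul, Finset.mul_sum]
  rw [Finset.sum_comm' (t' := Finset.univ) (s' := fun _ => Finset.univ) (by simp)]
  rw [Finset.sum_comm]
  conv_lhs => enter [2, x]; rw [Finset.sum_comm]
  rw [Finset.sum_comm]
  refine Finset.sum_congr rfl fun v _ => ?_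
  rw [Finset.sum_comm]
  refine Finset.sum_congr rfl fun i _ => Finset.sum_congr rfl fun j _ => ?_
  ring

lemma quad_lower {d : ℕ} (S : Finset (Fin d → ℤ)) (ω : (Fin d → ℤ) → ℝ) (hS : ∀ v, v ∉ S → ω v = 0)
    (hQ : (covQ d ω).PosDef) : ∃ q : ℝ, 0 < q ∧ ∀ ξ : Fin d → ℝ, q * ‖ξ‖^2 ≤ ∑ v ∈ S, ω v * (dotz ξ v)^2 := by
  have hc : Continuous (fun ξ : Fin d → ℝ => ∑ v ∈ S, ω v * (dotz ξ v)^2) :=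
    continuous_finsetSum _ fun v _ => continuous_const.mul ((dotz_cont v).pow 2)
  obtain ⟨q, hq, hq2⟩ := (isCompact_sphere (0 : Fin d → ℝ) 1).exists_forall_le' (a := 0) hc.continuousOn (by
    intro ξ hξ
    rw [← quad_eq S ω hS]
    have hne : ξ ≠ 0 := by
      rintro rfl
      simp at hξ
    simpa using hQ.dotProduct_mulVec_pos hne)
  refine ⟨q, hq, fun ξ => ?_⟩
  by_cases h0 : ξ = 0
  · subst h0; simp [dotz]
  · have hn : ‖ξ‖ ≠ 0 := norm_ne_zero_iff.2 h0
    have := hq2 (‖ξ‖⁻¹ • ξ) (by simp [norm_smul, hn])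
    have e : ∀ v, dotz (‖ξ‖⁻¹ • ξ) v = ‖ξ‖⁻¹ * dotz ξ v := by
      intro v; simp [dotz, Finset.mul_sum, mul_assoc]
    simp only [e] at this
    have e2 : ∑ v ∈ S, ω v * (‖ξ‖⁻¹ * dotz ξ v)^2 = (∑ v ∈ S, ω v * (dotz ξ v)^2) / ‖ξ‖^2 := by
      rw [Finset.sum_div]
      refine Finset.sum_congr rfl fun v _ => ?_
      field_simp
    rw [e2, le_div_iff₀ (by positivity)] at this
    exact this

lemma cw_bounds {d : ℕ} (S : Finset (Fin d → ℤ)) (ω : (Fin d → ℤ) → ℝ) (hS : ∀ v, v ∉ S → ω v = 0)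
    (hnn : ∀ v, 0 ≤ ω v) (hsum : ∑ v ∈ S, ω v = 1)
    (hsymm : ∀ v, ω (-v) = ω v) (hQ : (covQ d ω).PosDef)
    (haper : ∀ ξ : Fin d → ℝ, (∀ i, ξ i ∈ Set.Icc (-π) π) → ξ ≠ 0 → ‖ftOmega ω ξ‖ < 1) :
    ∃ c δ : ℝ, 0 < c ∧ 0 < δ ∧ ∀ ξ : Fin d → ℝ, (∀ i, ξ i ∈ Set.Icc (-π) π) →
      c * ‖ξ‖^2 ≤ 1 - cw S ω ξ ∧ 1 - cw S ω ξ ≤ 2 - δ := by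
  obtain ⟨q, hq, hq2⟩ := quad_lower S ω hS hQ
  have hab : ∀ ξ : Fin d → ℝ, (∀ i, ξ i ∈ Set.Icc (-π) π) → ξ ≠ 0 → |cw S ω ξ| < 1 := by
    intro ξ h1 h2
    have := haper ξ h1 h2
    rwa [ft_eq S ω hS hsymm, Complex.norm_real, Real.norm_eq_abs] at this
  have hcw0 : cw S ω 0 = 1 := by simp [cw, dotz, hsum]
  set box : Set (Fin d → ℝ) := Set.univ.pi (fun _ => Set.Icc (-π) π) with hbox
  have hcb : IsCompact box := isCompact_univ_pi fun _ => isCompact_Icc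
  have hmem : ∀ ξ : Fin d → ℝ, ξ ∈ box ↔ ∀ i, ξ i ∈ Set.Icc (-π) π := by
    intro ξ; simp only [hbox, Set.mem_univ_pi]
  obtain ⟨δ, hδ, hδ2⟩ := hcb.exists_forall_le' (a := 0) (f := fun ξ => 1 + cw S ω ξ)
    ((continuous_const.add (cw_cont S ω)).continuousOn) (by
      intro ξ hξ
      by_cases h0 : ξ = 0
      · subst h0; simp only [hcw0]; norm_num
      · have := abs_lt.1 (hab ξ ((hmem ξ).1 hξ) h0)
        linarith [this.1])
  set B : ℝ := 1 + ∑ v ∈ S, ∑ i, |(v i : ℝ)| with hB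
  have hB1 : 0 < B := by positivity
  have hdot : ∀ ξ : Fin d → ℝ, ∀ v ∈ S, |dotz ξ v| ≤ ‖ξ‖ * B := by
    intro ξ v hv
    have h1 : |dotz ξ v| ≤ ∑ i, ‖ξ‖ * |(v i : ℝ)| := by
      refine (Finset.abs_sum_le_sum_abs _ _).trans (Finset.sum_le_sum fun i _ => ?_)
      rw [abs_mul]
      gcongr
      exact norm_le_pi_norm ξ i
    rw [← Finset.mul_sum] at h1
    refine h1.trans (mul_le_mul_of_nonneg_left ?_ (norm_nonneg _))
    have := Finset.single_le_sum (f := fun v : Fin d → ℤ => ∑ i, |(v i : ℝ)|) (fun v _ => by positivity) hv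
    linarith
  obtain ⟨m, hm, hm2⟩ := (hcb.inter_right (isClosed_le continuous_const continuous_norm : IsClosed {ξ : Fin d → ℝ | π / B ≤ ‖ξ‖})).exists_forall_le' (a := 0) (f := fun ξ => 1 - cw S ω ξ)
    ((continuous_const.sub (cw_cont S ω)).continuousOn) (by
      intro ξ hξ
      have h0 : ξ ≠ 0 := by
        rintro rfl
        have := hξ.2
        simp at this
        have h3 : 0 < π / B := by positivity
        linarith
      have := abs_lt.1 (hab ξ ((hmem ξ).1 hξ.1) h0)
      linarith [this.2])
  refine ⟨min (2/π^2*q) (m/π^2), δ, by positivity, hδ, fun ξ hξ => ⟨?_, by linarith [hδ2 ξ ((hmem ξ).2 hξ)]⟩⟩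
  by_cases hs : π / B ≤ ‖ξ‖
  · have h1 := hm2 ξ ⟨(hmem ξ).2 hξ, hs⟩
    have h2 : ‖ξ‖ ≤ π := by
      rw [pi_norm_le_iff_of_nonneg Real.pi_pos.le]
      intro i
      exact abs_le.2 (hξ i)
    calc min (2/π^2*q) (m/π^2) * ‖ξ‖^2 ≤ (m/π^2) * π^2 := by
          gcongr
          exact min_le_right _ _
      _ = m := by field_simp
      _ ≤ _ := h1
  · push Not at hs
    have h1 : ∀ v ∈ S, ω v * (2/π^2 * (dotz ξ v)^2) ≤ ω v * (1 - Real.cos (dotz ξ v)) := by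
      intro v hv
      apply mul_le_mul_of_nonneg_left _ (hnn v)
      have : |dotz ξ v| ≤ π := by
        refine (hdot ξ v hv).trans ?_
        rw [lt_div_iff₀ hB1] at hs
        exact hs.le
      linarith [Real.cos_le_one_sub_mul_cos_sq this]
    have h2 := Finset.sum_le_sum h1
    have e1 : ∑ v ∈ S, ω v * (1 - Real.cos (dotz ξ v)) = 1 - cw S ω ξ := by
      simp only [mul_sub, mul_one, Finset.sum_sub_distrib, hsum, cw]
    have e2 : ∑ v ∈ S, ω v * (2/π^2 * (dotz ξ v)^2) = 2/π^2 * ∑ v ∈ S, ω v * (dotz ξ v)^2 := by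
      rw [Finset.mul_sum]; exact Finset.sum_congr rfl fun v _ => by ring
    rw [e1, e2] at h2
    refine le_trans ?_ h2
    calc min (2/π^2*q) (m/π^2) * ‖ξ‖^2 ≤ (2/π^2*q) * ‖ξ‖^2 := by
          gcongr
          exact min_le_left _ _
      _ = 2/π^2 * (q * ‖ξ‖^2) := by ring
      _ ≤ _ := by
          apply mul_le_mul_of_nonneg_left (hq2 ξ) (by positivity)

def ez {d : ℕ} (ξ : Fin d → ℝ) (v : Fin d → ℤ) : ℂ := Complex.exp (Complex.I * (dotz ξ v : ℂ))

lemma ez_add {d : ℕ} (ξ : Fin d → ℝ) (v w : Fin d → ℤ) : ez ξ (v + w) = ez ξ v * ez ξ w := by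
  unfold ez
  rw [← Complex.exp_add]
  congr 1
  simp only [dotz, Pi.add_apply, Int.cast_add, mul_add, Finset.sum_add_distrib]
  push_cast; ring

lemma ez_conj {d : ℕ} (ξ : Fin d → ℝ) (v : Fin d → ℤ) : (starRingEnd ℂ) (ez ξ v) = ez ξ (-v) := by
  unfold ez
  rw [← Complex.exp_conj, dotz_neg]
  simp

lemma int1 (k : ℤ) : ∫ s in Set.Icc (-π) π, Complex.exp (Complex.I * ((s * (k:ℝ) : ℝ) : ℂ)) =
    if k = 0 then (2 * π : ℂ) else 0 := by
  rw [integral_Icc_eq_integral_Ioc, ← intervalIntegral.integral_of_le (by linarith [Real.pi_pos])]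
  by_cases hk : k = 0
  · subst hk; simp; ring
  · rw [if_neg hk]
    have hc : (Complex.I * (k:ℂ)) ≠ 0 := by simp [hk]
    have := integral_exp_mul_complex (a := -π) (b := π) hc
    rw [show (fun s : ℝ => Complex.exp (Complex.I * ((s * (k:ℝ) : ℝ) : ℂ))) = fun s : ℝ => Complex.exp (Complex.I * (k:ℂ) * s) by
      funext s; push_cast; ring_nf]
    rw [this, div_eq_zero_iff]
    left
    rw [sub_eq_zero, Complex.exp_eq_exp_iff_exists_int]
    exact ⟨k, by push_cast; ring⟩

lemma intd {d : ℕ} (w : Fin d → ℤ) : ∫ ξ in Set.univ.pi (fun _ : Fin d => Set.Icc (-π) π), ez ξ w =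
    if w = 0 then (2 * π : ℂ)^d else 0 := by
  have h1 : ∀ ξ : Fin d → ℝ, ez ξ w = ∏ i, (fun (i : Fin d) (s : ℝ) => Complex.exp (Complex.I * ((s * (w i:ℝ) : ℝ) : ℂ))) i (ξ i) := by
    intro ξ
    simp only [ez, dotz]
    rw [← Complex.exp_sum]
    push_cast
    rw [Finset.mul_sum]
  simp only [h1]
  rw [MeasureTheory.volume_pi, Measure.restrict_pi_pi]
  rw [integral_fintype_prod_eq_prod (fun (i : Fin d) (s : ℝ) => Complex.exp (Complex.I * ((s * (w i:ℝ) : ℝ) : ℂ)))]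
  simp only [int1]
  by_cases hw : w = 0
  · subst hw; simp
  · rw [if_neg hw]
    obtain ⟨i, hi⟩ := Function.ne_iff.1 hw
    apply Finset.prod_eq_zero (Finset.mem_univ i)
    rw [if_neg (by simpa using hi)]

lemma ez_cont {d : ℕ} (w : Fin d → ℤ) : Continuous (fun ξ : Fin d → ℝ => ez ξ w) := by
  unfold ez
  have := dotz_cont w
  fun_prop

lemma parseval {d : ℕ} (F : Finset (Fin d → ℤ)) (x : (Fin d → ℤ) → ℝ) (Y : (Fin d → ℝ) → ℝ)
    (hY : ∀ ξ, (Y ξ : ℂ) = ∑ v ∈ F, (x v : ℂ) * ez ξ v) :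
    ∫ ξ in Set.univ.pi (fun _ : Fin d => Set.Icc (-π) π), (Y ξ)^2 = (2*π)^d * ∑ v ∈ F, (x v)^2 := by
  have hcb : IsCompact (Set.univ.pi (fun _ : Fin d => Set.Icc (-π) π)) := isCompact_univ_pi fun _ => isCompact_Icc
  have h1 : ∀ ξ, (((Y ξ)^2 : ℝ) : ℂ) = ∑ v ∈ F, ∑ u ∈ F, (x v : ℂ) * (x u : ℂ) * ez ξ (v - u) := by
    intro ξ
    have h2 : (Y ξ : ℂ) = ∑ v ∈ F, (x v : ℂ) * ez ξ (-v) := by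
      rw [← Complex.conj_ofReal, hY, map_sum]
      refine Finset.sum_congr rfl fun v _ => ?_
      rw [map_mul, Complex.conj_ofReal, ez_conj]
    push_cast
    rw [sq]
    conv_lhs => arg 1; rw [hY]
    rw [h2, Finset.sum_mul_sum]
    refine Finset.sum_congr rfl fun v _ => Finset.sum_congr rfl fun u _ => ?_
    rw [sub_eq_add_neg, ez_add]; ring
  have hint : ∀ w : Fin d → ℤ, ∀ c : ℂ, Integrable (fun ξ => c * ez ξ w) (volume.restrict (Set.univ.pi (fun _ : Fin d => Set.Icc (-π) π))) := by
    intro w c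
    exact ((continuous_const.mul (ez_cont w)).continuousOn.integrableOn_compact hcb)
  have h3 : ((∫ ξ in Set.univ.pi (fun _ : Fin d => Set.Icc (-π) π), (Y ξ)^2 : ℝ) : ℂ) = (((2*π)^d * ∑ v ∈ F, (x v)^2 : ℝ) : ℂ) := by
    rw [← integral_complex_ofReal]
    simp only [h1]
    rw [integral_finsetSum _ (fun v _ => integrable_finsetSum _ fun u _ => hint _ _)]
    push_cast
    rw [Finset.mul_sum]
    refine Finset.sum_congr rfl fun v hv => ?_
    rw [integral_finsetSum _ (fun u _ => hint _ _)]
    simp only [integral_const_mul, intd]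
    rw [Finset.sum_eq_single v]
    · simp; ring
    · intro u _ hu
      rw [if_neg (by rw [sub_eq_zero]; exact fun h => hu h.symm), mul_zero]
    · exact fun h => absurd hv h
  exact_mod_cast h3

lemma conv_eq {d : ℕ} (S : Finset (Fin d → ℤ)) (ω x : (Fin d → ℤ) → ℝ) (hS : ∀ v, v ∉ S → ω v = 0) (v : Fin d → ℤ) :
    latticeConv ω x v = ∑ w ∈ S, ω w * x (v - w) := by
  unfold latticeConv
  rw [← (Equiv.subLeft v).tsum_eq]
  simp only [Equiv.subLeft_apply, sub_sub_cancel]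
  apply tsum_eq_sum
  intro w hw
  simp [hS w hw]

lemma ft_conv {d : ℕ} (S : Finset (Fin d → ℤ)) (ω x : (Fin d → ℤ) → ℝ) (hS : ∀ v, v ∉ S → ω v = 0)
    (hsymm : ∀ v, ω (-v) = ω v) (hx : (Function.support x).Finite) (ξ : Fin d → ℝ) :
    HasSum (fun v => (latticeConv ω x v : ℂ) * ez ξ v) ((cw S ω ξ : ℂ) * ∑' v, (x v : ℂ) * ez ξ v) := by
  have hs : Summable (fun v => (x v : ℂ) * ez ξ v) := by
    apply summable_of_hasFiniteSupport
    refine hx.subset ?_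
    intro v hv
    simp at hv ⊢
    exact hv.1
  have h0 : (cw S ω ξ : ℂ) = ∑ w ∈ S, (ω w : ℂ) * ez ξ w := by
    rw [← ft_eq S ω hS hsymm]
    apply tsum_eq_sum
    intro v hv
    simp [hS v hv]
  rw [h0, Finset.sum_mul]
  have : (fun v => (latticeConv ω x v : ℂ) * ez ξ v) = fun v => ∑ w ∈ S, ((ω w : ℂ) * ez ξ w) * ((x (v - w) : ℂ) * ez ξ (v - w)) := by
    funext v
    rw [conv_eq S ω x hS]
    push_cast
    rw [Finset.sum_mul]
    refine Finset.sum_congr rfl fun w _ => ?_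
    have : ez ξ v = ez ξ w * ez ξ (v - w) := by rw [← ez_add]; simp
    rw [this]; ring
  rw [this]
  apply hasSum_sum
  intro w _
  apply HasSum.mul_left
  exact (Equiv.subRight w).hasSum_iff.2 hs.hasSum

lemma JP_decay (d : ℕ) (c δ : ℝ) (hc : 0 < c) (hδ : 0 < δ) :
    ∃ C : ℝ, 0 < C ∧ ∀ n : ℕ, 1 ≤ n → ∀ u t : ℝ, 0 ≤ u → c * u^2 ≤ t → t ≤ 2 - δ →
      ((JP d n).eval t)^2 ≤ C * (1 + n * u)^(-((d:ℝ) + 1/2)) := by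
  set α : ℝ := d / 2 with hα
  have hα0 : 0 ≤ α := by positivity
  set K := 16*(α+1/2)^2/δ with hK
  have hKp : 0 < K := by positivity
  set r : ℝ := d + 1/2 with hr
  have hr0 : 0 < r := by positivity
  have hrα : r = 2 * (α + 1/4) := by rw [hr, hα]; ring
  set U : ℝ := 1 + Real.sqrt (K / c) with hU
  have hU1 : 1 ≤ U := by rw [hU]; linarith [Real.sqrt_nonneg (K/c)]
  have hUK : K ≤ c * U^2 := by
    have h1 : K / c ≤ U^2 := by
      rw [← Real.sq_sqrt (by positivity : 0 ≤ K / c)]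
      have := Real.sqrt_nonneg (K/c)
      gcongr
      rw [hU]; linarith
    rw [div_le_iff₀ hc] at h1
    linarith
  set C1 : ℝ := 2/δ * (1+U)^r with hC1
  set C2 : ℝ := 5/δ * K^(α+1/4) * (4/c)^(α+1/4) with hC2
  refine ⟨C1 + C2, by positivity, ?_⟩
  intro n hn u t hu hut ht
  have ht0 : 0 ≤ t := le_trans (by positivity) hut
  obtain ⟨k, rfl⟩ : ∃ k, n = k + 1 := ⟨n - 1, by omega⟩
  set N : ℝ := ((k+1 : ℕ) : ℝ) with hN
  have hN1 : 1 ≤ N := by rw [hN]; exact_mod_cast hn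
  set l : ℝ := (k+1)*(k+1+α+1) with hl
  have hlN : N^2 ≤ l := by
    rw [hl, hN]; push_cast
    have : (0:ℝ) ≤ k := by positivity
    nlinarith
  have hl0 : 0 < l := by positivity
  obtain ⟨hb1, hb2⟩ := ode_bound α l δ hα0 hl0 hδ (fun t => (JP d (k+1)).eval t)
    (fun t => (JP d (k+1)).derivative.eval t) (fun t => (JP d (k+1)).derivative.derivative.eval t)
    (fun t => Polynomial.hasDerivAt _ t) (fun t => Polynomial.hasDerivAt _ t) (JP_zero d (k+1))
    (fun t h1 h2 => JP_ode d α hα k t h1 h2) t ht0 ht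
  generalize (JP d (k+1)).eval t = y at hb1 hb2 ⊢
  set w := N * u with hw
  have hw0 : 0 ≤ w := by positivity
  have hwl : c * w^2 ≤ l * t := by
    calc c * w^2 = N^2 * (c * u^2) := by rw [hw]; ring
      _ ≤ l * t := by gcongr
  rw [Real.rpow_neg (by positivity), ← div_eq_mul_inv, le_div_iff₀ (by positivity)]
  by_cases hcase : w ≤ U
  · calc y^2 * (1+w)^r ≤ 2/δ * (1+U)^r := by gcongr
      _ ≤ C1 + C2 := by
        have : 0 < C2 := by positivity
        linarith
  · push Not at hcase
    have hlt : K ≤ l * t := by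
      refine hUK.trans (le_trans ?_ hwl)
      gcongr
    have h3 := hb2 hlt
    have h4 : (1+w)^r ≤ (4/c)^(α+1/4) * (l*t)^(α+1/4) := by
      rw [← Real.mul_rpow (by positivity) (by positivity), hrα, Real.rpow_mul (by positivity)]
      apply Real.rpow_le_rpow (by positivity) _ (by positivity)
      rw [Real.rpow_two]
      have : (1+w)^2 ≤ 4 * w^2 := by nlinarith
      calc (1+w)^2 ≤ 4 * w^2 := this
        _ = 4/c * (c * w^2) := by field_simp
        _ ≤ _ := by gcongr
    calc y^2 * (1+w)^r ≤ y^2 * ((4/c)^(α+1/4) * (l*t)^(α+1/4)) := by gcongr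
      _ = (4/c)^(α+1/4) * ((l*t)^(α+1/4) * y^2) := by ring
      _ ≤ (4/c)^(α+1/4) * (5/δ * K^(α+1/4)) := by gcongr
      _ = C2 := by rw [hC2]; ring
      _ ≤ C1 + C2 := by
        have : 0 < C1 := by positivity
        linarith

theorem jacobi_iteration_l1_bound
    (d : ℕ) (hd : 1 ≤ d) (ω : (Fin d → ℤ) → ℝ)
    (hfin : (Function.support ω).Finite) (hnn : ∀ v, 0 ≤ ω v)
    (hmass : ∑' v : Fin d → ℤ, ω v = 1) (hsymm : ∀ v, ω (-v) = ω v)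
    (hQ : (covQ d ω).PosDef)
    (haper : ∀ ξ : Fin d → ℝ, (∀ i, ξ i ∈ Set.Icc (-π) π) → ξ ≠ 0 →
      ‖ftOmega ω ξ‖ < 1)
    (x : ℕ → (Fin d → ℤ) → ℝ)
    (hx0 : ∀ v, x 0 v = if v = 0 then 1 else 0)
    (hx1 : ∀ v, x 1 v = aCoef0 d * latticeConv ω (x 0) v + bCoef0 d * x 0 v)
    (hrec : ∀ n, 1 ≤ n → ∀ v,
      x (n + 1) v = aCoef d n * latticeConv ω (x n) v + bCoef d n * x n v - cCoef d n * x (n - 1) v) :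
    ∃ C : ℝ, 0 < C ∧ ∀ n : ℕ, ∑' v : Fin d → ℤ, |x n v| ≤ C := by
  set S := hfin.toFinset with hSd
  have hS : ∀ v, v ∉ S → ω v = 0 := by
    intro v hv
    simpa [hSd] using hv
  have hsum : ∑ v ∈ S, ω v = 1 := by
    rw [← hmass]; exact (tsum_eq_sum hS).symm
  obtain ⟨c, δ, hc, hδ, hcδ⟩ := cw_bounds S ω hS hnn hsum hsymm hQ haper
  obtain ⟨C, hC, hCb⟩ := JP_decay d c δ hc hδ
  -- supports
  obtain ⟨R, hR⟩ : ∃ R : ℕ, ∀ v ∈ S, ∀ i, |v i| ≤ (R : ℤ) := by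
    refine ⟨∑ v ∈ S, ∑ i, (v i).natAbs, fun v hv i => ?_⟩
    have h1 : (v i).natAbs ≤ ∑ i, (v i).natAbs :=
      Finset.single_le_sum (f := fun i => (v i).natAbs) (fun _ _ => Nat.zero_le _) (Finset.mem_univ i)
    have h2 : ∑ i, (v i).natAbs ≤ ∑ v ∈ S, ∑ i, (v i).natAbs :=
      Finset.single_le_sum (f := fun v : Fin d → ℤ => ∑ i, (v i).natAbs) (fun _ _ => Nat.zero_le _) hv
    rw [Int.abs_eq_natAbs]
    exact_mod_cast h1.trans h2
  have hsupp_conv : ∀ (y : (Fin d → ℤ) → ℝ) (n : ℕ), (∀ v, y v ≠ 0 → ∀ i, |v i| ≤ (n * R : ℤ)) →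
      ∀ v, latticeConv ω y v ≠ 0 → ∀ i, |v i| ≤ ((n+1) * R : ℤ) := by
    intro y n hy v hv i
    rw [conv_eq S ω y hS] at hv
    obtain ⟨w, hw, hw2⟩ := Finset.exists_ne_zero_of_sum_ne_zero hv
    have h1 := hy (v - w) (right_ne_zero_of_mul hw2) i
    have h2 := hR w hw i
    have h3 : |v i| ≤ |v i - w i| + |w i| := by
      calc |v i| = |(v i - w i) + w i| := by ring_nf
        _ ≤ _ := abs_add_le _ _
    simp only [Pi.sub_apply] at h1
    linarith
  have hsupp : ∀ n, (∀ v, x n v ≠ 0 → ∀ i, |v i| ≤ (n * R : ℤ)) ∧ (∀ v, x (n+1) v ≠ 0 → ∀ i, |v i| ≤ ((n+1 : ℕ) * R : ℤ)) := by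
    intro n
    induction n with
    | zero =>
      have h0 : ∀ v, x 0 v ≠ 0 → ∀ i, |v i| ≤ ((0:ℕ) * R : ℤ) := by
        intro v hv i
        rw [hx0] at hv
        have : v = 0 := by by_contra h; simp [h] at hv
        simp [this]
      refine ⟨h0, fun v hv i => ?_⟩
      by_cases h1 : latticeConv ω (x 0) v = 0
      · have h2 : x 0 v ≠ 0 := by
          intro h2; apply hv; rw [hx1, h1, h2]; simp
        have := h0 v h2 i
        refine this.trans ?_
        push_cast; simp
      · have := hsupp_conv (x 0) 0 h0 v h1 i
        simpa using this
    | succ n ih =>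
      refine ⟨ih.2, fun v hv i => ?_⟩
      have hRn : (0:ℤ) ≤ R := by positivity
      by_cases h1 : latticeConv ω (x (n+1)) v = 0
      · by_cases h2 : x (n+1) v = 0
        · have h3 : x n v ≠ 0 := by
            intro h3; apply hv; rw [hrec (n+1) (by omega), h1, h2]; simp [h3]
          have := ih.1 v h3 i
          push_cast
          linarith
        · have := ih.2 v h2 i
          push_cast at this ⊢
          linarith
      · have := hsupp_conv (x (n+1)) (n+1) ih.2 v h1 i
        push_cast at this ⊢
        linarith
  set F : ℕ → Finset (Fin d → ℤ) := fun n => Fintype.piFinset (fun _ => Finset.Icc (-(n*R : ℤ)) (n*R)) with hF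
  have hxF : ∀ n v, v ∉ F n → x n v = 0 := by
    intro n v hv
    by_contra h
    apply hv
    simp only [hF, Fintype.mem_piFinset, Finset.mem_Icc]
    exact fun i => abs_le.1 ((hsupp n).1 v h i)
  have hxfin : ∀ n, (Function.support (x n)).Finite := by
    intro n
    refine (F n).finite_toSet.subset fun v hv => ?_
    by_contra h
    exact hv (hxF n v h)
  have hsm : ∀ n ξ, Summable (fun v => (x n v : ℂ) * ez ξ v) := by
    intro n ξ
    apply summable_of_hasFiniteSupport
    refine (hxfin n).subset ?_
    intro v hv
    simp at hv ⊢
    exact hv.1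
  have hft : ∀ ξ n, (∑' v, (x n v : ℂ) * ez ξ v = (((JP d n).eval (1 - cw S ω ξ) : ℝ) : ℂ)) ∧
      (∑' v, (x (n+1) v : ℂ) * ez ξ v = (((JP d (n+1)).eval (1 - cw S ω ξ) : ℝ) : ℂ)) := by
    intro ξ n
    induction n with
    | zero =>
      have h0 : (∑' v, (x 0 v : ℂ) * ez ξ v = (((JP d 0).eval (1 - cw S ω ξ) : ℝ) : ℂ)) := by
        rw [tsum_eq_single 0]
        · simp [hx0, JP, ez, dotz]
        · intro v hv; simp [hx0, hv]
      refine ⟨h0, ?_⟩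
      have h1 := ((ft_conv S ω (x 0) hS hsymm (hxfin 0) ξ).mul_left (aCoef0 d : ℂ)).add
        ((hsm 0 ξ).hasSum.mul_left (bCoef0 d : ℂ))
      rw [h0] at h1
      have h2 := h1.tsum_eq
      refine Eq.trans (tsum_congr fun v => ?_) (h2.trans ?_)
      · rw [zero_add, hx1]; push_cast; ring
      · simp [JP]
    | succ n ih =>
      refine ⟨ih.2, ?_⟩
      have h1 := (((ft_conv S ω (x (n+1)) hS hsymm (hxfin (n+1)) ξ).mul_left (aCoef d (n+1) : ℂ)).add
        ((hsm (n+1) ξ).hasSum.mul_left (bCoef d (n+1) : ℂ))).sub ((hsm n ξ).hasSum.mul_left (cCoef d (n+1) : ℂ))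
      rw [ih.1, ih.2] at h1
      have h2 := h1.tsum_eq
      refine Eq.trans (tsum_congr fun v => ?_) (h2.trans ?_)
      · rw [hrec (n+1) (by omega)]; rw [Nat.add_sub_cancel]; push_cast; ring
      · rw [JP_rec]; push_cast; ring
  set r : ℝ := d + 1/2 with hr
  set I : ℝ := ∫ ξ : Fin d → ℝ, (1 + ‖ξ‖)^(-r) with hI
  have hI0 : 0 ≤ I := integral_nonneg fun ξ => by positivity
  have hint : Integrable (fun ξ : Fin d → ℝ => (1 + ‖ξ‖)^(-r)) := by
    apply integrable_one_add_norm
    simp [hr]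
  have hl2 : ∀ n : ℕ, 1 ≤ n → (2*π)^d * ∑ v ∈ F n, (x n v)^2 ≤ C * (((n:ℝ)^d)⁻¹ * I) := by
    intro n hn
    have hn0 : (0:ℝ) < n := by exact_mod_cast hn
    rw [← parseval (F n) (x n) (fun ξ => (JP d n).eval (1 - cw S ω ξ)) (by
      intro ξ
      rw [← (hft ξ n).1]
      apply tsum_eq_sum
      intro v hv
      simp [hxF n v hv])]
    have hcb : IsCompact (Set.univ.pi (fun _ : Fin d => Set.Icc (-π) π)) := isCompact_univ_pi fun _ => isCompact_Icc
    have hint2 : Integrable (fun ξ : Fin d → ℝ => C * (1 + ‖(n:ℝ) • ξ‖)^(-r)) :=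
      (hint.comp_smul hn0.ne').const_mul C
    have hs : ∫ ξ : Fin d → ℝ, C * (1 + ‖(n:ℝ) • ξ‖)^(-r) = C * (((n:ℝ)^d)⁻¹ * I) := by
      rw [integral_const_mul, Measure.integral_comp_smul volume (fun ξ : Fin d → ℝ => (1 + ‖ξ‖)^(-r))]
      rw [abs_of_nonneg (by positivity)]
      simp [hI]
    rw [← hs]
    refine le_trans ?_ (setIntegral_le_integral (s := Set.univ.pi (fun _ : Fin d => Set.Icc (-π) π)) hint2
      (Filter.Eventually.of_forall fun ξ => by positivity))
    apply setIntegral_mono_on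
    · apply ContinuousOn.integrableOn_compact hcb
      apply Continuous.continuousOn
      exact ((JP d n).continuous.comp (continuous_const.sub (cw_cont S ω))).pow 2
    · exact hint2.integrableOn
    · exact MeasurableSet.univ_pi fun _ => measurableSet_Icc
    · intro ξ hξ
      obtain ⟨h1, h2⟩ := hcδ ξ (fun i => hξ i (Set.mem_univ i))
      have := hCb n hn ‖ξ‖ _ (norm_nonneg ξ) h1 h2
      rw [norm_smul, Real.norm_of_nonneg hn0.le]
      exact this
  have hl1 : ∀ n, ∑' v, |x n v| = ∑ v ∈ F n, |x n v| := by
    intro n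
    apply tsum_eq_sum
    intro v hv; simp [hxF n v hv]
  set A : ℝ := (2*R+1)^d * (C * I / (2*π)^d) with hA
  have hA0 : 0 ≤ A := by positivity
  refine ⟨1 + Real.sqrt A, by positivity, fun n => ?_⟩
  have hsA := Real.sqrt_nonneg A
  rcases Nat.eq_zero_or_pos n with h0 | hn
  · subst h0
    rw [tsum_eq_single 0]
    · simp [hx0]
    · intro v hv; simp [hx0, hv]
  · have hn0 : (0:ℝ) < n := by exact_mod_cast hn
    rw [hl1]
    have h1 : (∑ v ∈ F n, |x n v|)^2 ≤ A := by
      refine sq_sum_le_card_mul_sum_sq.trans ?_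
      simp only [sq_abs]
      have hcard : ((F n).card : ℝ) ≤ (2*R+1)^d * n^d := by
        have e : (F n).card = (2*(n*R)+1)^d := by
          simp only [hF, Fintype.card_piFinset, Int.card_Icc, Finset.prod_const, Finset.card_univ, Fintype.card_fin]
          congr 1
          have : ((n:ℤ) * R) = ((n*R : ℕ) : ℤ) := by push_cast; rfl
          rw [this]; omega
        rw [e, ← mul_pow]
        push_cast
        have : (1:ℝ) ≤ n := by exact_mod_cast hn
        gcongr
        nlinarith
      have h2 : ∑ v ∈ F n, (x n v)^2 ≤ C * (((n:ℝ)^d)⁻¹ * I) / (2*π)^d := by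
        rw [le_div_iff₀ (by positivity)]
        linarith [hl2 n hn]
      calc ((F n).card : ℝ) * ∑ v ∈ F n, (x n v)^2
          ≤ ((2*R+1)^d * n^d) * (C * (((n:ℝ)^d)⁻¹ * I) / (2*π)^d) := by
            apply mul_le_mul hcard h2 (Finset.sum_nonneg fun v _ => sq_nonneg _) (by positivity)
        _ = A := by rw [hA]; field_simp
    have := Real.le_sqrt_of_sq_le h1
    linarith
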